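/- For every Λ > 0 there exists a constant C > 0, depending only on φ and Λ, with the following property. Let x ∈ ℝ⁴ and r > 0, suppose u is harmonic on an open set containing the closed ball B̄_x(2r), and suppose that H_φ(x,t) > 0 and N_φ(x,t) ≤ Λ for all t ∈ (0, 2r]. Then: (1) ∫_{B_x(r)} |u(y)|² dy ≤ C·r·H_φ(x,r); (2) ∫_{B_x(r)} |u(y)|·|∇u(y)| dy ≤ C·H_φ(x,r); (3) ∫_{B_x(r)} |∇u(y)|² dy ≤ C·r⁻¹·H_φ(x,r). -/

import Mathlib

open Metric MeasureTheory
open scoped RealInnerProductSpace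

noncomputable section

abbrev E4 := EuclideanSpace ℝ (Fin 4)

variable {E : Type*} [NormedAddCommGroup E] [InnerProductSpace ℝ E] [FiniteDimensional ℝ E]

/-- `u` is smooth and harmonic (the Laplacian, i.e. the sum of the pure second
derivatives in the coordinate directions, vanishes) on `Ω`. -/
def IsHarmonicOn (u : E4 → E) (Ω : Set E4) : Prop :=
  ContDiffOn ℝ (⊤ : ℕ∞) u Ω ∧
  ∀ x ∈ Ω, ∑ i : Fin 4,
    iteratedFDeriv ℝ 2 u x ![EuclideanSpace.single i (1:ℝ), EuclideanSpace.single i 1] = 0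

/-- `|∇u(y)|²`, the squared Frobenius norm of the derivative of `u` at `y`. -/
def gradSq (u : E4 → E) (y : E4) : ℝ :=
  ∑ i : Fin 4, ‖fderiv ℝ u y (EuclideanSpace.single i (1:ℝ))‖ ^ 2

/-- `D_φ(x,r) = ∫ |∇u(y)|² φ(|y−x|/r) dy`. -/
def Dphi (φ : ℝ → ℝ) (u : E4 → E) (x : E4) (r : ℝ) : ℝ :=
  ∫ y, gradSq u y * φ (‖y - x‖ / r)

/-- `H_φ(x,r) = −∫ |u(y)|² |y−x|⁻¹ φ'(|y−x|/r) dy`. -/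
def Hphi (φ : ℝ → ℝ) (u : E4 → E) (x : E4) (r : ℝ) : ℝ :=
  -∫ y, ‖u y‖ ^ 2 * ‖y - x‖⁻¹ * deriv φ (‖y - x‖ / r)

/-- `E_φ(x,r) = −∫ |∂_{ν_x}u(y)|² |y−x| φ'(|y−x|/r) dy`, where `ν_x(y) = (y−x)/|y−x|`. -/
def Ephi (φ : ℝ → ℝ) (u : E4 → E) (x : E4) (r : ℝ) : ℝ :=
  -∫ y, ‖fderiv ℝ u y (‖y - x‖⁻¹ • (y - x))‖ ^ 2 * ‖y - x‖ * deriv φ (‖y - x‖ / r)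

/-- The smoothed frequency `N_φ(x,r) = r D_φ(x,r) / H_φ(x,r)`. -/
def Nphi (φ : ℝ → ℝ) (u : E4 → E) (x : E4) (r : ℝ) : ℝ :=
  r * Dphi φ u x r / Hphi φ u x r

/-!
Write `H` and `D` for the height and energy, `d` for the dimension and `a` for the plateau radius of
the cutoff (`3 / 4` in the paper). Since `t ∇(φ(|y - x| / t)) = -w_t(y) (y - x)` for the weight
`w_t` defining `H`, every `C¹` field `ω` satisfies `∫ ⟪ω, y - x⟫ w_t = t ∫ (div ω) φ(|y - x| / t)`.

For `ω = ∇|u|²` we have `div ω = 2 |∇u|²` by harmonicity, and rescaling to the unit ball turns the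
identity into `(t H)' = d H + 2 t D`. A frequency bound `t D ≤ Λ H` then bounds `t H` at radius
`r / a` by `a ^ (-(d + 2 Λ))` times its value at `r`.

For `ω = |u|² (y - x)` the identity, with Young's inequality on the derivative term, bounds
`∫ |u|² φ(|y - x| / t)` by `t H + t² D` up to a constant. At `t = r / a` the cutoff is `1` on
`B_x(r)`, so `H(r)` controls both `∫ |u|²` and `∫ |∇u|²` there; the mixed integral follows by AM-GM.
-/

open InnerProductSpace Module Topology Laplacian

lemma le_div_rpow_mul_of_mul_deriv_le {f f' : ℝ → ℝ} {r R p : ℝ} (hr : 0 < r) (hrR : r ≤ R)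
    (hf : ∀ t ∈ Set.Icc r R, HasDerivAt f (f' t) t)
    (hf' : ∀ t ∈ Set.Icc r R, t * f' t ≤ p * f t) :
    f R ≤ (R / r) ^ p * f r := by
  have hpos : ∀ t ∈ Set.Icc r R, 0 < t := fun t ht => hr.trans_le ht.1
  have hderiv : ∀ t ∈ Set.Icc r R, HasDerivAt (fun t => t ^ (-p) * f t)
      (t ^ (-p - 1) * (t * f' t - p * f t)) t := by
    intro t ht
    refine ((Real.hasDerivAt_rpow_const (Or.inl (hpos t ht).ne')).mul (hf t ht)).congr_deriv ?_
    rw [Real.rpow_sub_one (hpos t ht).ne']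
    field_simp [(hpos t ht).ne']
    ring
  have hanti : AntitoneOn (fun t => t ^ (-p) * f t) (Set.Icc r R) := by
    refine antitoneOn_of_hasDerivWithinAt_nonpos (convex_Icc r R)
      (fun t ht => (hderiv t ht).continuousAt.continuousWithinAt)
      (fun t ht => (hderiv t (interior_subset ht)).hasDerivWithinAt) fun t ht => ?_
    exact mul_nonpos_of_nonneg_of_nonpos (Real.rpow_nonneg (hpos t (interior_subset ht)).le _)
      (sub_nonpos.2 (hf' t (interior_subset ht)))
  have hle : R ^ (-p) * f R ≤ r ^ (-p) * f r :=
    hanti (Set.left_mem_Icc.2 hrR) (Set.right_mem_Icc.2 hrR) hrR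
  have hR : 0 < R := hr.trans_le hrR
  rw [Real.rpow_neg hR.le, Real.rpow_neg hr.le, ← div_eq_inv_mul, ← div_eq_inv_mul,
    div_le_iff₀ (Real.rpow_pos_of_pos hR p)] at hle
  rw [Real.div_rpow hR.le hr.le]
  exact hle.trans_eq (by ring)

lemma exists_contDiff_forall_eventuallyEq {V F : Type*} [NormedAddCommGroup V] [NormedSpace ℝ V]
    [FiniteDimensional ℝ V] [NormedAddCommGroup F] [NormedSpace ℝ F] {u : V → F} {s U : Set V}
    {n : ℕ∞} (hs : IsClosed s) (hU : IsOpen U) (hsU : s ⊆ U) (hu : ContDiffOn ℝ n u U) :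
    ∃ v : V → F, ContDiff ℝ n v ∧ ∀ y ∈ s, v =ᶠ[𝓝 y] u := by
  obtain ⟨χ, hχ_zero, hχ_one, -⟩ := exists_contMDiffMap_zero_one_nhds_of_isClosed
    (modelWithCornersSelf ℝ V) hU.isClosed_compl hs
    (Set.disjoint_left.2 fun _ hx hxs => hx (hsU hxs)) (n := n)
  rw [Filter.Eventually, mem_nhdsSet_iff_forall] at hχ_zero hχ_one
  refine ⟨fun y => χ y • u y, contDiff_iff_contDiffAt.2 fun y => ?_, fun y hy => ?_⟩
  · by_cases hy : y ∈ U
    · exact χ.contMDiff.contDiff.contDiffAt.smul (hu.contDiffAt (hU.mem_nhds hy))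
    · refine contDiffAt_const (c := (0 : F)) |>.congr_of_eventuallyEq ?_
      filter_upwards [hχ_zero y hy] with z hz
      rw [hz, zero_smul]
  · filter_upwards [hχ_one y hy] with z hz
    rw [hz, one_smul]

lemma exists_contDiff_laplacian_eq_zero_of_harmonicOnNhd {V F : Type*} [NormedAddCommGroup V]
    [InnerProductSpace ℝ V] [FiniteDimensional ℝ V] [NormedAddCommGroup F] [NormedSpace ℝ F]
    {u : V → F} {s : Set V} (hs : IsClosed s) (hu : HarmonicOnNhd u s) :
    ∃ v : V → F, ContDiff ℝ 2 v ∧ Set.EqOn u v s ∧ ∀ y ∈ s, Δ v y = 0 := by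
  obtain ⟨v, hv, hvu⟩ := exists_contDiff_forall_eventuallyEq (n := 2) hs
    (isOpen_setOfPred_harmonicAt u) hu fun y hy => hy.1.contDiffWithinAt
  refine ⟨v, hv, fun y hy => (hvu y hy).eq_of_nhds.symm, fun y hy => ?_⟩
  rw [(laplacian_congr_nhds (hvu y hy)).eq_of_nhds, (hu y hy).2.eq_of_nhds, Pi.zero_apply]

section ParametricIntegral

variable {V : Type*} [NormedAddCommGroup V] [NormedSpace ℝ V] [MeasurableSpace V]
  [OpensMeasurableSpace V] {μ : Measure V} [IsFiniteMeasureOnCompacts μ]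

lemma hasDerivAt_integral_comp_add_smul_mul {f w : V → ℝ} (hf : ContDiff ℝ 1 f)
    (hw : Continuous w) (hw_supp : HasCompactSupport w) (x : V) (t : ℝ) :
    HasDerivAt (fun s : ℝ => ∫ z, f (x + s • z) * w z ∂μ)
      (∫ z, fderiv ℝ f (x + t • z) z * w z ∂μ) t := by
  have hF (s : ℝ) : Continuous fun z => f (x + s • z) * w z :=
    (hf.continuous.comp (by fun_prop)).mul hw
  have hf' : Continuous fun p : ℝ × V => fderiv ℝ f (x + p.1 • p.2) p.2 :=
    ((hf.continuous_fderiv (by simp)).comp (by fun_prop)).clm_apply continuous_snd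
  obtain ⟨C, hC⟩ := ((isCompact_closedBall t 1).prod hw_supp).exists_bound_of_continuousOn
    hf'.continuousOn
  refine (hasDerivAt_integral_of_dominated_loc_of_deriv_le (s := ball t 1)
    (F := fun s z => f (x + s • z) * w z) (F' := fun s z => fderiv ℝ f (x + s • z) z * w z)
    (bound := fun z => C * ‖w z‖) (ball_mem_nhds t one_pos)
    (.of_forall fun s => (hF s).aestronglyMeasurable)
    ((hF t).integrable_of_hasCompactSupport hw_supp.mul_left)
    ((hf'.comp (.prodMk_right t)).mul hw).aestronglyMeasurable
    (.of_forall fun z s hs => ?_)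
    ((hw.integrable_of_hasCompactSupport hw_supp).norm.const_mul C)
    (.of_forall fun z s _ => ?_)).2
  · rw [norm_mul]
    by_cases hz : z ∈ tsupport w
    · exact mul_le_mul_of_nonneg_right (hC (s, z) ⟨ball_subset_closedBall hs, hz⟩) (norm_nonneg _)
    · simp [image_eq_zero_of_notMem_tsupport hz]
  · have hline : HasDerivAt (fun s : ℝ => x + s • z) z s := by
      simpa using ((hasDerivAt_id s).smul_const z).const_add x
    exact ((hf.differentiable one_ne_zero _).hasFDerivAt.comp_hasDerivAt s hline).mul_const _

end ParametricIntegral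

section Integrals

variable {V : Type*} [NormedAddCommGroup V] [NormedSpace ℝ V] [FiniteDimensional ℝ V]
  [MeasurableSpace V] [BorelSpace V] {μ : Measure V} [μ.IsAddHaarMeasure]

lemma integral_eq_pow_finrank_mul_integral_comp_add_smul (f : V → ℝ) (x : V) {t : ℝ}
    (ht : 0 < t) : ∫ y, f y ∂μ = t ^ finrank ℝ V * ∫ z, f (x + t • z) ∂μ := by
  rw [Measure.integral_comp_smul_of_nonneg μ (fun z => f (x + z)) t (hR := ht.le),
    integral_add_left_eq_self f x, smul_eq_mul, mul_inv_cancel_left₀ (pow_ne_zero _ ht.ne')]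

lemma integral_mul_fderiv_eq_neg_of_hasCompactSupport {f g : V → ℝ} (hf : ContDiff ℝ 1 f)
    (hg : ContDiff ℝ 1 g) (hg_supp : HasCompactSupport g) (e : V) :
    ∫ y, f y * fderiv ℝ g y e ∂μ = -∫ y, fderiv ℝ f y e * g y ∂μ := by
  have hf' : Continuous fun y => fderiv ℝ f y e :=
    (hf.continuous_fderiv one_ne_zero).clm_apply continuous_const
  have hg' : Continuous fun y => fderiv ℝ g y e :=
    (hg.continuous_fderiv one_ne_zero).clm_apply continuous_const
  exact integral_mul_fderiv_eq_neg_fderiv_mul_of_integrable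
    ((hf'.mul hg.continuous).integrable_of_hasCompactSupport hg_supp.mul_left)
    ((hf.continuous.mul hg').integrable_of_hasCompactSupport
      (hg_supp.fderiv_apply (𝕜 := ℝ) e).mul_left)
    ((hf.continuous.mul hg.continuous).integrable_of_hasCompactSupport hg_supp.mul_left)
    (fun y _ => hf.differentiable one_ne_zero y) (fun y _ => hg.differentiable one_ne_zero y)

end Integrals

section Frobenius

variable {V F : Type*} [NormedAddCommGroup V] [InnerProductSpace ℝ V] [FiniteDimensional ℝ V]
  [NormedAddCommGroup F] [NormedSpace ℝ F]

/-- The squared Frobenius (Hilbert–Schmidt) norm of a linear map, computed in the standard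
orthonormal basis of its domain; for maps into an inner product space, `frobeniusSq_eq_sum` shows
that any other orthonormal basis gives the same value. -/
def frobeniusSq (L : V →L[ℝ] F) : ℝ := ∑ i, ‖L (stdOrthonormalBasis ℝ V i)‖ ^ 2

lemma frobeniusSq_nonneg (L : V →L[ℝ] F) : 0 ≤ frobeniusSq L :=
  Finset.sum_nonneg fun _ _ => sq_nonneg _

lemma continuous_frobeniusSq : Continuous (frobeniusSq : (V →L[ℝ] F) → ℝ) := by
  unfold frobeniusSq
  fun_prop

lemma norm_apply_sq_le_frobeniusSq_mul (L : V →L[ℝ] F) (z : V) :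
    ‖L z‖ ^ 2 ≤ frobeniusSq L * ‖z‖ ^ 2 := by
  let b := stdOrthonormalBasis ℝ V
  have hLz : ‖L z‖ ≤ ∑ i, ‖L (b i)‖ * ‖⟪b i, z⟫‖ := by
    conv_lhs => rw [← b.sum_repr' z, map_sum]
    refine (norm_sum_le _ _).trans_eq (Finset.sum_congr rfl fun i _ => ?_)
    rw [map_smul, norm_smul, mul_comm]
  calc ‖L z‖ ^ 2
      ≤ (∑ i, ‖L (b i)‖ * ‖⟪b i, z⟫‖) ^ 2 := pow_le_pow_left₀ (norm_nonneg _) hLz 2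
    _ ≤ (∑ i, ‖L (b i)‖ ^ 2) * ∑ i, ‖⟪b i, z⟫‖ ^ 2 := Finset.sum_mul_sq_le_sq_mul_sq _ _ _
    _ = frobeniusSq L * ‖z‖ ^ 2 := by rw [b.sum_sq_norm_inner_right z]; rfl

lemma frobeniusSq_eq_sum {ι W : Type*} [Fintype ι] [NormedAddCommGroup W]
    [InnerProductSpace ℝ W] (b : OrthonormalBasis ι ℝ V) (L : V →L[ℝ] W) :
    frobeniusSq L = ∑ i, ‖L (b i)‖ ^ 2 := by
  have h := (canonicalCovariantTensor_eq_sum V (stdOrthonormalBasis ℝ V)).symm.trans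
    (canonicalCovariantTensor_eq_sum V b)
  simpa [frobeniusSq] using congrArg
    (TensorProduct.lift ((innerₗ W).compl₁₂ (L : V →ₗ[ℝ] W) (L : V →ₗ[ℝ] W))) h

end Frobenius

section Divergence

variable {V : Type*} [NormedAddCommGroup V] [InnerProductSpace ℝ V] [FiniteDimensional ℝ V]

/-- The divergence (minus the codifferential) of a 1-form `ω` on a Euclidean space, that is, the
divergence of the vector field dual to `ω`. Using 1-forms makes `fderiv ℝ f` play the role of the
gradient of `f`. -/
def divergence (ω : V → V →L[ℝ] ℝ) (y : V) : ℝ :=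
  ∑ i, fderiv ℝ ω y (stdOrthonormalBasis ℝ V i) (stdOrthonormalBasis ℝ V i)

lemma divergence_fderiv (f : V → ℝ) (y : V) : divergence (fderiv ℝ f) y = Δ f y := by
  rw [laplacian_eq_iteratedFDeriv_stdOrthonormalBasis]
  simp [divergence, iteratedFDeriv_two_apply]

lemma divergence_smul_innerSL_sub {f : V → ℝ} {x y : V} (hf : DifferentiableAt ℝ f y) :
    divergence (fun y => f y • innerSL ℝ (y - x)) y
      = fderiv ℝ f y (y - x) + finrank ℝ V * f y := by
  let b := stdOrthonormalBasis ℝ V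
  have hderiv : HasFDerivAt (fun y => f y • innerSL ℝ (y - x)) _ y :=
    hf.hasFDerivAt.smul ((innerSL ℝ).hasFDerivAt.comp y ((hasFDerivAt_id y).sub_const x))
  have hb : ∑ i, ⟪y - x, b i⟫ • b i = y - x := by
    simpa only [real_inner_comm] using b.sum_repr' (y - x)
  calc divergence (fun y => f y • innerSL ℝ (y - x)) y
      = ∑ i, (fderiv ℝ f y (⟪y - x, b i⟫ • b i) + f y) := by
        refine Finset.sum_congr rfl fun i _ => ?_
        have happly : fderiv ℝ (fun y => f y • innerSL ℝ (y - x)) y (b i) (b i)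
            = f y * ⟪b i, b i⟫ + fderiv ℝ f y (b i) * ⟪y - x, b i⟫ := by
          rw [hderiv.fderiv]
          rfl
        rw [happly, real_inner_self_eq_norm_sq, b.norm_eq_one, map_smul, smul_eq_mul]
        ring
    _ = fderiv ℝ f y (y - x) + finrank ℝ V * f y := by
        rw [Finset.sum_add_distrib, ← map_sum, hb]
        simp

theorem integral_sum_apply_mul_fderiv_eq_neg_integral_divergence_mul [MeasurableSpace V]
    [BorelSpace V] {μ : Measure V} [μ.IsAddHaarMeasure] {ω : V → V →L[ℝ] ℝ} {g : V → ℝ}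
    (hω : ContDiff ℝ 1 ω) (hg : ContDiff ℝ 1 g) (hg_supp : HasCompactSupport g) :
    ∫ y, ∑ i, ω y (stdOrthonormalBasis ℝ V i) * fderiv ℝ g y (stdOrthonormalBasis ℝ V i) ∂μ
      = -∫ y, divergence ω y * g y ∂μ := by
  let b := stdOrthonormalBasis ℝ V
  have hω' (i) : ContDiff ℝ 1 fun y => ω y (b i) := hω.clm_apply contDiff_const
  have hdiv (i y) : fderiv ℝ (fun y => ω y (b i)) y (b i) = fderiv ℝ ω y (b i) (b i) := by
    simp [fderiv_clm_apply (hω.differentiable one_ne_zero y) (differentiableAt_const _)]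
  have hg' (i) : Continuous fun y => fderiv ℝ g y (b i) :=
    (hg.continuous_fderiv one_ne_zero).clm_apply continuous_const
  have hdiv_cont (i) : Continuous fun y => fderiv ℝ ω y (b i) (b i) :=
    ((hω.continuous_fderiv one_ne_zero).clm_apply continuous_const).clm_apply continuous_const
  simp only [divergence, Finset.sum_mul]
  rw [integral_finsetSum, integral_finsetSum, ← Finset.sum_neg_distrib]
  · refine Finset.sum_congr rfl fun i _ => ?_
    rw [integral_mul_fderiv_eq_neg_of_hasCompactSupport (hω' i) hg hg_supp]
    simp only [hdiv, b]
  · exact fun i _ => ((hdiv_cont i).mul hg.continuous).integrable_of_hasCompactSupport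
      hg_supp.mul_left
  · exact fun i _ => ((hω' i).continuous.mul (hg' i)).integrable_of_hasCompactSupport
      (hg_supp.fderiv_apply (𝕜 := ℝ) _).mul_left

end Divergence

section NormSq

variable {V F : Type*} [NormedAddCommGroup V] [NormedAddCommGroup F] [InnerProductSpace ℝ F]

lemma fderiv_norm_sq_comp_apply [NormedSpace ℝ V] {v : V → F} {y : V}
    (hv : DifferentiableAt ℝ v y) (e : V) :
    fderiv ℝ (fun y => ‖v y‖ ^ 2) y e = 2 * ⟪v y, fderiv ℝ v y e⟫ := by
  simp [hv.hasFDerivAt.norm_sq.fderiv]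

lemma neg_le_two_mul_real_inner (v w : F) {ε : ℝ} (hε : 0 < ε) :
    -(ε * ‖v‖ ^ 2 + ε⁻¹ * ‖w‖ ^ 2) ≤ 2 * ⟪v, w⟫ := by
  have hexpand : ‖ε • v + w‖ ^ 2 = ε * (ε * ‖v‖ ^ 2 + 2 * ⟪v, w⟫ + ε⁻¹ * ‖w‖ ^ 2) := by
    rw [norm_add_sq_real, norm_smul, real_inner_smul_left, Real.norm_of_nonneg hε.le]
    field_simp
  have hnonneg := (mul_nonneg_iff_of_pos_left hε).1 (hexpand ▸ sq_nonneg ‖ε • v + w‖)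
  linear_combination hnonneg

theorem laplacian_norm_sq [InnerProductSpace ℝ V] [FiniteDimensional ℝ V] {v : V → F} {y : V}
    (hv : ContDiffAt ℝ 2 v y) :
    Δ (fun y => ‖v y‖ ^ 2) y = 2 * frobeniusSq (fderiv ℝ v y) + 2 * ⟪v y, Δ v y⟫ := by
  let b := stdOrthonormalBasis ℝ V
  have hv' : DifferentiableAt ℝ (fderiv ℝ v) y :=
    (hv.fderiv_right (m := 1) (by norm_num)).differentiableAt one_ne_zero
  have hfderiv : fderiv ℝ (fun y => ‖v y‖ ^ 2)
      =ᶠ[𝓝 y] fun z => (2 : ℝ) • (innerSL ℝ (v z)).comp (fderiv ℝ v z) := by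
    filter_upwards [hv.eventually (by simp)] with z hz
    ext e
    simp [fderiv_norm_sq_comp_apply (hz.differentiableAt two_ne_zero)]
  have hsecond (i) : fderiv ℝ (fderiv ℝ fun y => ‖v y‖ ^ 2) y (b i) (b i)
      = 2 * (‖fderiv ℝ v y (b i)‖ ^ 2 + ⟪v y, fderiv ℝ (fderiv ℝ v) y (b i) (b i)⟫) := by
    have hinner := (innerSL ℝ).hasFDerivAt.comp y (hv.differentiableAt two_ne_zero).hasFDerivAt
    have hcomp : HasFDerivAt (fun z => (2 : ℝ) • (innerSL ℝ (v z)).comp (fderiv ℝ v z)) _ y :=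
      (hinner.clm_comp hv'.hasFDerivAt).const_smul (2 : ℝ)
    rw [hfderiv.fderiv_eq, hcomp.fderiv, ← real_inner_self_eq_norm_sq, add_comm]
    rfl
  simp only [laplacian_eq_iteratedFDeriv_stdOrthonormalBasis, iteratedFDeriv_two_apply,
    frobeniusSq, inner_sum, Finset.mul_sum, ← Finset.sum_add_distrib]
  refine Finset.sum_congr rfl fun i _ => ?_
  simpa [b, mul_add] using hsecond i

lemma neg_le_fderiv_norm_sq_comp_apply_sub [InnerProductSpace ℝ V] [FiniteDimensional ℝ V]
    {v : V → F} {x y : V} {t ε : ℝ} (hv : DifferentiableAt ℝ v y) (hy : y ∈ ball x t)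
    (hε : 0 < ε) :
    -(ε * ‖v y‖ ^ 2 + ε⁻¹ * t ^ 2 * frobeniusSq (fderiv ℝ v y))
      ≤ fderiv ℝ (fun y => ‖v y‖ ^ 2) y (y - x) := by
  have hdist : ‖y - x‖ ^ 2 ≤ t ^ 2 :=
    pow_le_pow_left₀ (norm_nonneg _) (mem_ball_iff_norm.1 hy).le 2
  have hsq : ‖fderiv ℝ v y (y - x)‖ ^ 2 ≤ frobeniusSq (fderiv ℝ v y) * t ^ 2 :=
    (norm_apply_sq_le_frobeniusSq_mul _ _).trans
      (mul_le_mul_of_nonneg_left hdist (frobeniusSq_nonneg _))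
  rw [fderiv_norm_sq_comp_apply hv]
  linear_combination neg_le_two_mul_real_inner (v y) (fderiv ℝ v y (y - x)) hε + ε⁻¹ * hsq

end NormSq

/-- `φ` is a `C¹` radial cutoff profile with plateau `[0, a]`: it decreases from `1` on `(-∞, a]`
to `0` on `[1, ∞)`. -/
structure IsCutoff (a : ℝ) (φ : ℝ → ℝ) : Prop where
  pos : 0 < a
  contDiff : ContDiff ℝ 1 φ
  antitone : Antitone φ
  eq_one : ∀ t ≤ a, φ t = 1
  eq_zero : ∀ t, 1 ≤ t → φ t = 0

namespace IsCutoff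

variable {a t : ℝ} {φ : ℝ → ℝ}

lemma nonneg (hφ : IsCutoff a φ) (t : ℝ) : 0 ≤ φ t :=
  (hφ.eq_zero _ (le_max_right t 1)).ge.trans (hφ.antitone (le_max_left t 1))

lemma le_one (hφ : IsCutoff a φ) (t : ℝ) : φ t ≤ 1 :=
  (hφ.antitone (min_le_left t a)).trans_eq (hφ.eq_one _ (min_le_right t a))

lemma lt_one (hφ : IsCutoff a φ) : a < 1 := by
  by_contra! ha
  simpa [hφ.eq_one a le_rfl] using hφ.eq_zero a ha

lemma deriv_eq_zero_of_le (hφ : IsCutoff a φ) (ht : t ≤ a) : deriv φ t = 0 :=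
  IsLocalMax.deriv_eq_zero (.of_forall fun s => (hφ.le_one s).trans_eq (hφ.eq_one t ht).symm)

lemma deriv_eq_zero_of_one_le (hφ : IsCutoff a φ) (ht : 1 ≤ t) : deriv φ t = 0 :=
  IsLocalMin.deriv_eq_zero (.of_forall fun s => (hφ.eq_zero t ht).trans_le (hφ.nonneg s))

end IsCutoff

section RadialCutoff

variable {V : Type*} [NormedAddCommGroup V]

/-- The cutoff `φ(|y - x| / t)` at scale `t` about `x`. -/
def radialCutoff (φ : ℝ → ℝ) (x : V) (t : ℝ) (y : V) : ℝ := φ (‖y - x‖ / t)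

/-- The weight `-|y - x|⁻¹ φ'(|y - x| / t)`, a smoothed version of surface measure on the sphere of
radius `t` about `x`, normalised so that `t` times the gradient of `radialCutoff φ x t` at `y` is
`-radialWeight φ x t y • (y - x)`. The junk value `0⁻¹ = 0` at `y = x` is harmless, as `φ'` vanishes
there for a cutoff `φ`. -/
def radialWeight (φ : ℝ → ℝ) (x : V) (t : ℝ) (y : V) : ℝ :=
  -(‖y - x‖⁻¹ * deriv φ (‖y - x‖ / t))

variable {a t : ℝ} {φ : ℝ → ℝ} {x y : V}

lemma radialWeight_add_smul [NormedSpace ℝ V] (φ : ℝ → ℝ) (x : V) (ht : 0 < t) (z : V) :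
    radialWeight φ x t (x + t • z) = t⁻¹ * radialWeight φ 0 1 z := by
  simp [radialWeight, norm_smul, abs_of_pos ht, ht.ne', mul_assoc, mul_left_comm]

namespace IsCutoff

lemma radialCutoff_nonneg (hφ : IsCutoff a φ) (x : V) (t : ℝ) (y : V) :
    0 ≤ radialCutoff φ x t y :=
  hφ.nonneg _

lemma radialWeight_nonneg (hφ : IsCutoff a φ) (x : V) (t : ℝ) (y : V) :
    0 ≤ radialWeight φ x t y :=
  neg_nonneg.2 <| mul_nonpos_of_nonneg_of_nonpos (inv_nonneg.2 (norm_nonneg _))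
    hφ.antitone.deriv_nonpos

lemma radialCutoff_eq_one (hφ : IsCutoff a φ) (ht : 0 < t) (hy : y ∈ closedBall x (a * t)) :
    radialCutoff φ x t y = 1 :=
  hφ.eq_one _ ((div_le_iff₀ ht).2 (mem_closedBall_iff_norm.1 hy))

lemma radialCutoff_eq_zero (hφ : IsCutoff a φ) (ht : 0 < t) (hy : y ∉ ball x t) :
    radialCutoff φ x t y = 0 :=
  hφ.eq_zero _ ((one_le_div ht).2 (not_lt.1 fun h => hy (mem_ball_iff_norm.2 h)))

lemma radialWeight_eq_zero_of_mem (hφ : IsCutoff a φ) (ht : 0 < t)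
    (hy : y ∈ closedBall x (a * t)) : radialWeight φ x t y = 0 := by
  rw [radialWeight, hφ.deriv_eq_zero_of_le ((div_le_iff₀ ht).2 (mem_closedBall_iff_norm.1 hy)),
    mul_zero, neg_zero]

lemma radialWeight_eq_zero_of_notMem (hφ : IsCutoff a φ) (ht : 0 < t) (hy : y ∉ ball x t) :
    radialWeight φ x t y = 0 := by
  rw [radialWeight, hφ.deriv_eq_zero_of_one_le
    ((one_le_div ht).2 (not_lt.1 fun h => hy (mem_ball_iff_norm.2 h))), mul_zero, neg_zero]

lemma continuous_radialWeight (hφ : IsCutoff a φ) (x : V) (ht : 0 < t) :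
    Continuous (radialWeight φ x t) := by
  refine continuous_iff_continuousAt.2 fun y => ?_
  obtain rfl | hy := eq_or_ne y x
  · refine (continuousAt_const (y := (0 : ℝ))).congr ?_
    filter_upwards [closedBall_mem_nhds y (mul_pos hφ.pos ht)] with z hz
    exact (hφ.radialWeight_eq_zero_of_mem ht hz).symm
  · have hinv : ContinuousAt (fun y => ‖y - x‖⁻¹) y :=
      (by fun_prop : ContinuousAt (fun y => ‖y - x‖) y).inv₀ (norm_sub_eq_zero_iff.not.2 hy)
    exact (hinv.mul ((hφ.contDiff.continuous_deriv le_rfl).comp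
      (by fun_prop : Continuous fun y => ‖y - x‖ / t)).continuousAt).neg

lemma hasCompactSupport_radialWeight [ProperSpace V] (hφ : IsCutoff a φ) (x : V) (ht : 0 < t) :
    HasCompactSupport (radialWeight φ x t) :=
  .of_support_subset_isCompact (isCompact_closedBall x t) fun _ hy => ball_subset_closedBall <|
    not_imp_comm.1 (hφ.radialWeight_eq_zero_of_notMem ht) hy

lemma hasCompactSupport_radialCutoff [ProperSpace V] (hφ : IsCutoff a φ) (x : V) (ht : 0 < t) :
    HasCompactSupport (radialCutoff φ x t) :=
  .of_support_subset_isCompact (isCompact_closedBall x t) fun _ hy => ball_subset_closedBall <|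
    not_imp_comm.1 (hφ.radialCutoff_eq_zero ht) hy

variable [InnerProductSpace ℝ V]

lemma hasFDerivAt_radialCutoff (hφ : IsCutoff a φ) (x : V) (ht : 0 < t) (y : V) :
    HasFDerivAt (radialCutoff φ x t) (-(t⁻¹ * radialWeight φ x t y) • innerSL ℝ (y - x)) y := by
  obtain rfl | hy := eq_or_ne y x
  · rw [sub_self, map_zero, smul_zero]
    refine (hasFDerivAt_const (1 : ℝ) y).congr_of_eventuallyEq ?_
    filter_upwards [closedBall_mem_nhds y (mul_pos hφ.pos ht)] with z hz
    exact hφ.radialCutoff_eq_one ht hz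
  · have hz : y - x ≠ 0 := sub_ne_zero.2 hy
    have hnorm : HasFDerivAt (fun y => ‖y - x‖) (‖y - x‖⁻¹ • innerSL ℝ (y - x)) y := by
      have hsqrt := ((hasFDerivAt_id y).sub_const x).norm_sq.sqrt (by simpa using hz)
      simp only [id, Real.sqrt_sq (norm_nonneg _)] at hsqrt
      refine hsqrt.congr_fderiv ?_
      ext e
      simp [mul_assoc]
    refine ((hφ.contDiff.differentiable one_ne_zero _).hasDerivAt.comp_hasFDerivAt y
      (hnorm.mul_const t⁻¹)).congr_fderiv ?_
    ext e
    simp [radialWeight, div_eq_mul_inv]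
    ring

lemma contDiff_radialCutoff (hφ : IsCutoff a φ) (x : V) (ht : 0 < t) :
    ContDiff ℝ 1 (radialCutoff φ x t) := by
  refine contDiff_one_iff_hasFDerivAt.2 ⟨_, ?_, hφ.hasFDerivAt_radialCutoff x ht⟩
  have hw := hφ.continuous_radialWeight x ht
  fun_prop

theorem integral_apply_sub_mul_radialWeight [FiniteDimensional ℝ V] [MeasurableSpace V]
    [BorelSpace V] (hφ : IsCutoff a φ) {ω : V → V →L[ℝ] ℝ} (hω : ContDiff ℝ 1 ω) (x : V)
    (ht : 0 < t) :
    ∫ y, ω y (y - x) * radialWeight φ x t y = t * ∫ y, divergence ω y * radialCutoff φ x t y := by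
  have hsum (y : V) : ∑ i, ω y (stdOrthonormalBasis ℝ V i)
        * fderiv ℝ (radialCutoff φ x t) y (stdOrthonormalBasis ℝ V i)
      = -t⁻¹ * (ω y (y - x) * radialWeight φ x t y) := by
    conv_rhs => rw [← (stdOrthonormalBasis ℝ V).sum_repr' (y - x)]
    rw [(hφ.hasFDerivAt_radialCutoff x ht y).fderiv, map_sum, Finset.sum_mul, Finset.mul_sum]
    refine Finset.sum_congr rfl fun i _ => ?_
    simp [real_inner_comm, inner_sub_right]
    ring
  have hparts := integral_sum_apply_mul_fderiv_eq_neg_integral_divergence_mul (μ := volume) hω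
    (hφ.contDiff_radialCutoff x ht) (hφ.hasCompactSupport_radialCutoff x ht)
  simp only [hsum, integral_const_mul] at hparts
  rw [neg_mul, neg_inj] at hparts
  exact (inv_mul_eq_iff_eq_mul₀ ht.ne').1 hparts

end IsCutoff

end RadialCutoff

section EnergyHeight

variable {V F : Type*} [NormedAddCommGroup V] [InnerProductSpace ℝ V] [FiniteDimensional ℝ V]
  [MeasurableSpace V] [BorelSpace V] [NormedAddCommGroup F]

/-- The smoothed `L²` norm `H_φ(x, t)` of `u` over the sphere of radius `t` about `x`. -/
def cutoffHeight (φ : ℝ → ℝ) (u : V → F) (x : V) (t : ℝ) : ℝ :=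
  ∫ y, ‖u y‖ ^ 2 * radialWeight φ x t y

/-- The smoothed Dirichlet energy `D_φ(x, t)` of `u`. -/
def cutoffEnergy [NormedSpace ℝ F] (φ : ℝ → ℝ) (u : V → F) (x : V) (t : ℝ) : ℝ :=
  ∫ y, frobeniusSq (fderiv ℝ u y) * radialCutoff φ x t y

namespace IsCutoff

variable {a t r R Λ : ℝ} {φ : ℝ → ℝ} {x : V} {u v : V → F}

lemma cutoffHeight_nonneg (hφ : IsCutoff a φ) (u : V → F) (x : V) (t : ℝ) :
    0 ≤ cutoffHeight φ u x t :=
  integral_nonneg fun y => mul_nonneg (sq_nonneg _) (hφ.radialWeight_nonneg x t y)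

lemma cutoffHeight_congr (hφ : IsCutoff a φ) (ht : 0 < t) (h : Set.EqOn u v (ball x t)) :
    cutoffHeight φ u x t = cutoffHeight φ v x t := by
  refine integral_congr_ae (.of_forall fun y => ?_)
  by_cases hy : y ∈ ball x t
  · simp only [h hy]
  · simp only [hφ.radialWeight_eq_zero_of_notMem ht hy, mul_zero]

lemma cutoffEnergy_congr [NormedSpace ℝ F] (hφ : IsCutoff a φ) (ht : 0 < t)
    (h : Set.EqOn u v (ball x t)) :
    cutoffEnergy φ u x t = cutoffEnergy φ v x t := by
  refine integral_congr_ae (.of_forall fun y => ?_)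
  by_cases hy : y ∈ ball x t
  · simp only [(h.eventuallyEq_of_mem (isOpen_ball.mem_nhds hy)).fderiv_eq]
  · simp only [hφ.radialCutoff_eq_zero ht hy, mul_zero]

lemma integrable_mul_radialCutoff (hφ : IsCutoff a φ) {g : V → ℝ} (hg : Continuous g) (x : V)
    (ht : 0 < t) : Integrable fun y => g y * radialCutoff φ x t y :=
  (hg.mul (hφ.contDiff_radialCutoff x ht).continuous).integrable_of_hasCompactSupport
    (hφ.hasCompactSupport_radialCutoff x ht).mul_left

lemma integrable_mul_radialWeight (hφ : IsCutoff a φ) {g : V → ℝ} (hg : Continuous g) (x : V)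
    (ht : 0 < t) : Integrable fun y => g y * radialWeight φ x t y :=
  (hg.mul (hφ.continuous_radialWeight x ht)).integrable_of_hasCompactSupport
    (hφ.hasCompactSupport_radialWeight x ht).mul_left

lemma integral_mul_radialCutoff_mono (hφ : IsCutoff a φ) {f g : V → ℝ} (hf : Continuous f)
    (hg : Continuous g) (ht : 0 < t) (hfg : ∀ y ∈ ball x t, f y ≤ g y) :
    ∫ y, f y * radialCutoff φ x t y ≤ ∫ y, g y * radialCutoff φ x t y := by
  refine integral_mono (hφ.integrable_mul_radialCutoff hf x ht)
    (hφ.integrable_mul_radialCutoff hg x ht) fun y => ?_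
  by_cases hy : y ∈ ball x t
  · exact mul_le_mul_of_nonneg_right (hfg y hy) (hφ.radialCutoff_nonneg x t y)
  · simp only [hφ.radialCutoff_eq_zero ht hy, mul_zero, le_refl]

lemma integral_mul_radialWeight_mono (hφ : IsCutoff a φ) {f g : V → ℝ} (hf : Continuous f)
    (hg : Continuous g) (ht : 0 < t) (hfg : ∀ y ∈ ball x t, f y ≤ g y) :
    ∫ y, f y * radialWeight φ x t y ≤ ∫ y, g y * radialWeight φ x t y := by
  refine integral_mono (hφ.integrable_mul_radialWeight hf x ht)
    (hφ.integrable_mul_radialWeight hg x ht) fun y => ?_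
  by_cases hy : y ∈ ball x t
  · exact mul_le_mul_of_nonneg_right (hfg y hy) (hφ.radialWeight_nonneg x t y)
  · simp only [hφ.radialWeight_eq_zero_of_notMem ht hy, mul_zero, le_refl]

lemma setIntegral_ball_le_integral_mul_radialCutoff (hφ : IsCutoff a φ) {g : V → ℝ}
    (hg : Continuous g) (hg_nonneg : ∀ y, 0 ≤ g y) (x : V) (hr : 0 < r) :
    ∫ y in ball x r, g y ≤ ∫ y, g y * radialCutoff φ x (r / a) y := by
  have hR : 0 < r / a := div_pos hr hφ.pos
  have hintegrable := hφ.integrable_mul_radialCutoff hg x hR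
  calc ∫ y in ball x r, g y
      = ∫ y in ball x r, g y * radialCutoff φ x (r / a) y := by
        refine setIntegral_congr_fun measurableSet_ball fun y hy => ?_
        have hy' : y ∈ closedBall x (a * (r / a)) := by
          rw [mul_div_cancel₀ _ hφ.pos.ne']
          exact ball_subset_closedBall hy
        simp only [hφ.radialCutoff_eq_one hR hy', mul_one]
    _ ≤ ∫ y, g y * radialCutoff φ x (r / a) y :=
        setIntegral_le_integral hintegrable
          (.of_forall fun y => mul_nonneg (hg_nonneg y) (hφ.radialCutoff_nonneg x _ y))

theorem integral_mul_norm_sub_sq_mul_radialWeight (hφ : IsCutoff a φ) {f : V → ℝ}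
    (hf : ContDiff ℝ 1 f) (x : V) (ht : 0 < t) :
    ∫ y, f y * ‖y - x‖ ^ 2 * radialWeight φ x t y
      = t * ∫ y, (fderiv ℝ f y (y - x) + finrank ℝ V * f y) * radialCutoff φ x t y := by
  have hω : ContDiff ℝ 1 fun y => f y • innerSL ℝ (y - x) :=
    hf.smul ((innerSL ℝ).contDiff.comp (contDiff_id.sub contDiff_const))
  have happly (y : V) : (f y • innerSL ℝ (y - x)) (y - x) = f y * ‖y - x‖ ^ 2 :=
    congrArg (f y * ·) (real_inner_self_eq_norm_sq (y - x))
  simpa only [happly, divergence_smul_innerSL_sub (hf.differentiable one_ne_zero _)] using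
    hφ.integral_apply_sub_mul_radialWeight hω x ht

variable [InnerProductSpace ℝ F]

theorem integral_fderiv_norm_sq_mul_radialWeight (hφ : IsCutoff a φ) (hv : ContDiff ℝ 2 v)
    (ht : 0 < t) (hΔ : ∀ y ∈ ball x t, Δ v y = 0) :
    ∫ y, fderiv ℝ (fun y => ‖v y‖ ^ 2) y (y - x) * radialWeight φ x t y
      = t * (2 * cutoffEnergy φ v x t) := by
  have hgrad : ContDiff ℝ 1 (fderiv ℝ fun y => ‖v y‖ ^ 2) :=
    (hv.norm_sq ℝ).fderiv_right (by norm_num)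
  rw [hφ.integral_apply_sub_mul_radialWeight hgrad x ht, cutoffEnergy, ← integral_const_mul 2]
  refine congrArg (t * ·) (integral_congr_ae (.of_forall fun y => ?_))
  by_cases hy : y ∈ ball x t
  · simp only [divergence_fderiv, laplacian_norm_sq hv.contDiffAt, hΔ y hy, inner_zero_right,
      mul_zero, add_zero, mul_assoc]
  · simp only [hφ.radialCutoff_eq_zero ht hy, mul_zero]

theorem hasDerivAt_mul_cutoffHeight (hφ : IsCutoff a φ) (hv : ContDiff ℝ 2 v) (ht : 0 < t)
    (hΔ : ∀ y ∈ ball x t, Δ v y = 0) :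
    HasDerivAt (fun s => s * cutoffHeight φ v x s)
      (finrank ℝ V * cutoffHeight φ v x t + 2 * t * cutoffEnergy φ v x t) t := by
  let d := finrank ℝ V
  let f : V → ℝ := fun y => ‖v y‖ ^ 2
  let G : ℝ → ℝ := fun s => ∫ z, f (x + s • z) * radialWeight φ 0 1 z
  let G' : ℝ := ∫ z, fderiv ℝ f (x + t • z) z * radialWeight φ 0 1 z
  have hG : HasDerivAt G G' t :=
    hasDerivAt_integral_comp_add_smul_mul ((hv.norm_sq ℝ).of_le (by norm_num))
      (hφ.continuous_radialWeight 0 one_pos) (hφ.hasCompactSupport_radialWeight 0 one_pos) x t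
  have hheight {s : ℝ} (hs : 0 < s) : s * cutoffHeight φ v x s = s ^ d * G s := by
    rw [cutoffHeight, integral_eq_pow_finrank_mul_integral_comp_add_smul _ x hs]
    simp only [radialWeight_add_smul φ x hs, mul_left_comm _ s⁻¹, integral_const_mul, G, f, d]
    field_simp
  have henergy : 2 * t * cutoffEnergy φ v x t = t ^ d * G' := by
    rw [mul_comm 2 t, mul_assoc, ← hφ.integral_fderiv_norm_sq_mul_radialWeight hv ht hΔ,
      integral_eq_pow_finrank_mul_integral_comp_add_smul _ x ht]
    simp only [radialWeight_add_smul φ x ht, add_sub_cancel_left, map_smul, smul_eq_mul,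
      mul_left_comm _ t⁻¹, mul_assoc, inv_mul_cancel_left₀ ht.ne', G', f, d]
  have hpow : HasDerivAt (fun s : ℝ => s ^ d) (d * (t ^ d / t)) t := by
    simpa [zpow_sub_one₀ ht.ne', div_eq_mul_inv] using hasDerivAt_zpow (d : ℤ) t (.inl ht.ne')
  refine ((hpow.mul hG).congr_deriv ?_).congr_of_eventuallyEq ?_
  · rw [henergy, mul_assoc, div_mul_eq_mul_div, ← hheight ht, mul_div_cancel_left₀ _ ht.ne']
  · filter_upwards [lt_mem_nhds ht] with s hs using hheight hs

lemma mul_cutoffHeight_le (hφ : IsCutoff a φ) (hv : ContDiff ℝ 2 v) (hr : 0 < r) (hrR : r ≤ R)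
    (hΔ : ∀ y ∈ ball x R, Δ v y = 0)
    (hΛ : ∀ t ∈ Set.Icc r R, t * cutoffEnergy φ v x t ≤ Λ * cutoffHeight φ v x t) :
    R * cutoffHeight φ v x R
      ≤ (R / r) ^ (finrank ℝ V + 2 * Λ) * (r * cutoffHeight φ v x r) := by
  refine le_div_rpow_mul_of_mul_deriv_le hr hrR (fun t ht => hφ.hasDerivAt_mul_cutoffHeight hv
    (hr.trans_le ht.1) fun y hy => hΔ y (ball_subset_ball ht.2 hy)) fun t ht => ?_
  have hle := mul_le_mul_of_nonneg_left (hΛ t ht) (by linarith [ht.1] : 0 ≤ 2 * t)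
  linear_combination hle

theorem sub_mul_integral_norm_sq_mul_radialCutoff_le (hφ : IsCutoff a φ) (hv : ContDiff ℝ 1 v)
    (x : V) (ht : 0 < t) {ε : ℝ} (hε : 0 < ε) :
    (finrank ℝ V - ε) * ∫ y, ‖v y‖ ^ 2 * radialCutoff φ x t y
      ≤ t * cutoffHeight φ v x t + ε⁻¹ * t ^ 2 * cutoffEnergy φ v x t := by
  have hf : ContDiff ℝ 1 fun y => ‖v y‖ ^ 2 := hv.norm_sq ℝ
  have hfrob : Continuous fun y => frobeniusSq (fderiv ℝ v y) :=
    continuous_frobeniusSq.comp (hv.continuous_fderiv one_ne_zero)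
  have hradial : Continuous fun y => fderiv ℝ (fun y => ‖v y‖ ^ 2) y (y - x) :=
    (hf.continuous_fderiv one_ne_zero).clm_apply (continuous_id.sub continuous_const)
  have hcutoff : (finrank ℝ V - ε) * (∫ y, ‖v y‖ ^ 2 * radialCutoff φ x t y)
        - ε⁻¹ * t ^ 2 * cutoffEnergy φ v x t
      ≤ ∫ y, (fderiv ℝ (fun y => ‖v y‖ ^ 2) y (y - x) + finrank ℝ V * ‖v y‖ ^ 2)
        * radialCutoff φ x t y := by
    rw [cutoffEnergy, ← integral_const_mul, ← integral_const_mul, ← integral_sub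
      ((hφ.integrable_mul_radialCutoff hf.continuous x ht).const_mul _)
      ((hφ.integrable_mul_radialCutoff hfrob x ht).const_mul _)]
    simp only [← mul_assoc, ← sub_mul]
    refine hφ.integral_mul_radialCutoff_mono
      ((hf.continuous.const_mul _).sub (hfrob.const_mul _))
      (hradial.add (hf.continuous.const_mul _)) ht fun y hy => ?_
    linear_combination neg_le_fderiv_norm_sq_comp_apply_sub
      (hv.differentiable one_ne_zero y) hy hε
  have hweight : ∫ y, ‖v y‖ ^ 2 * ‖y - x‖ ^ 2 * radialWeight φ x t y
      ≤ t ^ 2 * cutoffHeight φ v x t := by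
    rw [cutoffHeight, ← integral_const_mul]
    simp only [← mul_assoc]
    refine hφ.integral_mul_radialWeight_mono (hf.continuous.mul (by fun_prop))
      (hf.continuous.const_mul _) ht fun y hy => ?_
    have hdist := (mem_ball_iff_norm.1 hy).le
    rw [mul_comm]
    gcongr
  rw [hφ.integral_mul_norm_sub_sq_mul_radialWeight hf x ht] at hweight
  refine le_of_mul_le_mul_left ?_ ht
  linear_combination hweight + t * hcutoff

end IsCutoff

end EnergyHeight

lemma setIntegral_mul_le_half_add {α : Type*} [MeasurableSpace α] {μ : Measure α} {s : Set α}
    {f g : α → ℝ} (hf : IntegrableOn (fun y => f y ^ 2) s μ)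
    (hg : IntegrableOn (fun y => g y ^ 2) s μ)
    (hfg : IntegrableOn (fun y => f y * g y) s μ) {r : ℝ} (hr : 0 < r) :
    ∫ y in s, f y * g y ∂μ
      ≤ (r⁻¹ * (∫ y in s, f y ^ 2 ∂μ) + r * ∫ y in s, g y ^ 2 ∂μ) / 2 := by
  rw [← integral_const_mul, ← integral_const_mul, ← integral_add (hf.const_mul _) (hg.const_mul _),
    ← integral_div]
  refine integral_mono hfg (((hf.const_mul _).add (hg.const_mul _)).div_const _) fun y => ?_
  have hsq : 0 ≤ r⁻¹ * (f y - r * g y) ^ 2 := by positivity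
  have hexpand : r⁻¹ * (f y - r * g y) ^ 2 = r⁻¹ * f y ^ 2 - 2 * (f y * g y) + r * g y ^ 2 := by
    field_simp
    ring
  dsimp only
  linear_combination (hsq.trans_eq hexpand) / 2

section BallEstimates

/-- The constant in the bounds for `∫ |u|²`, `∫ |u||∇u|` and `∫ |∇u|²` over a ball in `ℝᵈ` by the
height, for a cutoff with plateau `[0, a]` and frequency at most `Λ`: the last factor is the growth
of `t H(t)` between the radii `r` and `r / a`. -/
def ballEstimateConst (d : ℕ) (a Λ : ℝ) : ℝ := (2 + 4 * Λ) * a⁻¹ ^ (d + 2 * Λ)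

lemma ballEstimateConst_pos (d : ℕ) {a Λ : ℝ} (ha : 0 < a) (hΛ : 0 ≤ Λ) :
    0 < ballEstimateConst d a Λ := by
  unfold ballEstimateConst
  positivity

variable {V F : Type*} [NormedAddCommGroup V] [InnerProductSpace ℝ V] [FiniteDimensional ℝ V]
  [MeasurableSpace V] [BorelSpace V] [NormedAddCommGroup F] [InnerProductSpace ℝ F]
  {a r Λ : ℝ} {φ : ℝ → ℝ} {x : V} {u v : V → F}

namespace IsCutoff

lemma div_mul_cutoffHeight_le (hφ : IsCutoff a φ) (hv : ContDiff ℝ 2 v) (hr : 0 < r)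
    (hΔ : ∀ y ∈ ball x (r / a), Δ v y = 0)
    (hΛ : ∀ t ∈ Set.Icc r (r / a), t * cutoffEnergy φ v x t ≤ Λ * cutoffHeight φ v x t) :
    r / a * cutoffHeight φ v x (r / a)
      ≤ a⁻¹ ^ (finrank ℝ V + 2 * Λ) * (r * cutoffHeight φ v x r) := by
  have hratio : r / a / r = a⁻¹ := by field_simp
  simpa only [hratio] using
    hφ.mul_cutoffHeight_le hv hr (le_div_self hr.le hφ.pos hφ.lt_one.le) hΔ hΛ

theorem setIntegral_ball_norm_sq_le [Nontrivial V] (hφ : IsCutoff a φ) (hv : ContDiff ℝ 2 v)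
    (hr : 0 < r) (hΛ : 0 ≤ Λ) (hΔ : ∀ y ∈ ball x (r / a), Δ v y = 0)
    (hfreq : ∀ t ∈ Set.Icc r (r / a), t * cutoffEnergy φ v x t ≤ Λ * cutoffHeight φ v x t) :
    ∫ y in ball x r, ‖v y‖ ^ 2
      ≤ ballEstimateConst (finrank ℝ V) a Λ * r * cutoffHeight φ v x r := by
  set R := r / a
  have hR : 0 < R := div_pos hr hφ.pos
  have hrR : r ≤ R := le_div_self hr.le hφ.pos hφ.lt_one.le
  have hd : (1 : ℝ) ≤ finrank ℝ V := Nat.one_le_cast.2 finrank_pos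
  have hmass_nonneg : 0 ≤ ∫ y, ‖v y‖ ^ 2 * radialCutoff φ x R y :=
    integral_nonneg fun y => mul_nonneg (sq_nonneg _) (hφ.radialCutoff_nonneg x R y)
  have hmass := hφ.sub_mul_integral_norm_sq_mul_radialCutoff_le (hv.of_le (by norm_num)) x hR
    (ε := 1 / 2) (by norm_num)
  calc ∫ y in ball x r, ‖v y‖ ^ 2
      ≤ ∫ y, ‖v y‖ ^ 2 * radialCutoff φ x R y :=
        hφ.setIntegral_ball_le_integral_mul_radialCutoff (hv.continuous.norm.pow 2)
          (fun y => sq_nonneg _) x hr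
    _ ≤ 2 * (R * cutoffHeight φ v x R + 2 * R * (R * cutoffEnergy φ v x R)) := by
        linear_combination 2 * hmass + 2 * mul_nonneg (sub_nonneg.2 hd) hmass_nonneg
    _ ≤ (2 + 4 * Λ) * (R * cutoffHeight φ v x R) := by
        linear_combination (4 * R) * hfreq R ⟨hrR, le_rfl⟩
    _ ≤ (2 + 4 * Λ) * (a⁻¹ ^ (finrank ℝ V + 2 * Λ) * (r * cutoffHeight φ v x r)) :=
        mul_le_mul_of_nonneg_left (hφ.div_mul_cutoffHeight_le hv hr hΔ hfreq) (by positivity)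
    _ = ballEstimateConst (finrank ℝ V) a Λ * r * cutoffHeight φ v x r := by
        rw [ballEstimateConst]
        ring

theorem setIntegral_ball_frobeniusSq_le (hφ : IsCutoff a φ) (hv : ContDiff ℝ 2 v)
    (hr : 0 < r) (hΛ : 0 ≤ Λ) (hΔ : ∀ y ∈ ball x (r / a), Δ v y = 0)
    (hfreq : ∀ t ∈ Set.Icc r (r / a), t * cutoffEnergy φ v x t ≤ Λ * cutoffHeight φ v x t) :
    ∫ y in ball x r, frobeniusSq (fderiv ℝ v y)
      ≤ ballEstimateConst (finrank ℝ V) a Λ * r⁻¹ * cutoffHeight φ v x r := by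
  set R := r / a
  have hR : 0 < R := div_pos hr hφ.pos
  have hrR : r ≤ R := le_div_self hr.le hφ.pos hφ.lt_one.le
  have hD : 0 ≤ cutoffEnergy φ v x R :=
    integral_nonneg fun y => mul_nonneg (frobeniusSq_nonneg _) (hφ.radialCutoff_nonneg x R y)
  have hgrowth_nonneg : 0 ≤ a⁻¹ ^ (finrank ℝ V + 2 * Λ) * (r * cutoffHeight φ v x r) :=
    mul_nonneg (Real.rpow_nonneg (inv_nonneg.2 hφ.pos.le) _)
      (mul_nonneg hr.le (hφ.cutoffHeight_nonneg v x r))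
  have hball : ∫ y in ball x r, frobeniusSq (fderiv ℝ v y) ≤ cutoffEnergy φ v x R :=
    hφ.setIntegral_ball_le_integral_mul_radialCutoff
      (continuous_frobeniusSq.comp (hv.continuous_fderiv two_ne_zero))
      (fun y => frobeniusSq_nonneg _) x hr
  have hscaled : r * (r * cutoffEnergy φ v x R)
      ≤ ballEstimateConst (finrank ℝ V) a Λ * (r * cutoffHeight φ v x r) :=
    calc r * (r * cutoffEnergy φ v x R)
        ≤ R * (R * cutoffEnergy φ v x R) := by gcongr
      _ ≤ Λ * (R * cutoffHeight φ v x R) := by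
          linear_combination R * hfreq R ⟨hrR, le_rfl⟩
      _ ≤ Λ * (a⁻¹ ^ (finrank ℝ V + 2 * Λ) * (r * cutoffHeight φ v x r)) :=
          mul_le_mul_of_nonneg_left (hφ.div_mul_cutoffHeight_le hv hr hΔ hfreq) hΛ
      _ ≤ (2 + 4 * Λ) * (a⁻¹ ^ (finrank ℝ V + 2 * Λ) * (r * cutoffHeight φ v x r)) := by
          linear_combination (2 + 3 * Λ) * hgrowth_nonneg
      _ = ballEstimateConst (finrank ℝ V) a Λ * (r * cutoffHeight φ v x r) := by
          rw [ballEstimateConst, mul_assoc]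
  refine hball.trans ?_
  rw [mul_right_comm, ← div_eq_mul_inv, le_div_iff₀ hr]
  refine le_of_mul_le_mul_left ?_ hr
  linear_combination hscaled

theorem setIntegral_ball_norm_mul_sqrt_frobeniusSq_le [Nontrivial V] (hφ : IsCutoff a φ)
    (hv : ContDiff ℝ 2 v) (hr : 0 < r) (hΛ : 0 ≤ Λ) (hΔ : ∀ y ∈ ball x (r / a), Δ v y = 0)
    (hfreq : ∀ t ∈ Set.Icc r (r / a), t * cutoffEnergy φ v x t ≤ Λ * cutoffHeight φ v x t) :
    ∫ y in ball x r, ‖v y‖ * √(frobeniusSq (fderiv ℝ v y))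
      ≤ ballEstimateConst (finrank ℝ V) a Λ * cutoffHeight φ v x r := by
  have hnorm : Continuous fun y => ‖v y‖ := hv.continuous.norm
  have hsqrt : Continuous fun y => √(frobeniusSq (fderiv ℝ v y)) :=
    (continuous_frobeniusSq.comp (hv.continuous_fderiv two_ne_zero)).sqrt
  have hintegrable {g : V → ℝ} (hg : Continuous g) : IntegrableOn g (ball x r) :=
    (hg.continuousOn.integrableOn_compact (isCompact_closedBall x r)).mono_set
      ball_subset_closedBall
  have hyoung := setIntegral_mul_le_half_add (hintegrable (hnorm.pow 2)) (hintegrable (hsqrt.pow 2))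
    (hintegrable (hnorm.mul hsqrt)) hr
  simp only [Real.sq_sqrt (frobeniusSq_nonneg _)] at hyoung
  have hmass := hφ.setIntegral_ball_norm_sq_le hv hr hΛ hΔ hfreq
  have henergy := hφ.setIntegral_ball_frobeniusSq_le hv hr hΛ hΔ hfreq
  refine hyoung.trans ?_
  calc (r⁻¹ * (∫ y in ball x r, ‖v y‖ ^ 2) + r * ∫ y in ball x r, frobeniusSq (fderiv ℝ v y)) / 2
      ≤ (r⁻¹ * (ballEstimateConst (finrank ℝ V) a Λ * r * cutoffHeight φ v x r)
          + r * (ballEstimateConst (finrank ℝ V) a Λ * r⁻¹ * cutoffHeight φ v x r)) / 2 := by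
        gcongr
    _ = ballEstimateConst (finrank ℝ V) a Λ * cutoffHeight φ v x r := by
        field_simp
        ring

end IsCutoff

theorem stmt_16_general [Nontrivial V] (hφ : IsCutoff a φ) (hr : 0 < r) (hΛ : 0 ≤ Λ)
    (hu : HarmonicOnNhd u (closedBall x (r / a)))
    (hfreq : ∀ t ∈ Set.Icc r (r / a), t * cutoffEnergy φ u x t ≤ Λ * cutoffHeight φ u x t) :
    ∫ y in ball x r, ‖u y‖ ^ 2
        ≤ ballEstimateConst (finrank ℝ V) a Λ * r * cutoffHeight φ u x r ∧
      ∫ y in ball x r, ‖u y‖ * √(frobeniusSq (fderiv ℝ u y))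
        ≤ ballEstimateConst (finrank ℝ V) a Λ * cutoffHeight φ u x r ∧
      ∫ y in ball x r, frobeniusSq (fderiv ℝ u y)
        ≤ ballEstimateConst (finrank ℝ V) a Λ * r⁻¹ * cutoffHeight φ u x r := by
  have hrR : r ≤ r / a := le_div_self hr.le hφ.pos hφ.lt_one.le
  obtain ⟨v, hv, huv, hΔ⟩ :=
    exists_contDiff_laplacian_eq_zero_of_harmonicOnNhd isClosed_closedBall hu
  replace hΔ : ∀ y ∈ ball x (r / a), Δ v y = 0 := fun y hy => hΔ y (ball_subset_closedBall hy)
  have huv_ball {t : ℝ} (ht : t ≤ r / a) : Set.EqOn u v (ball x t) :=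
    huv.mono ((ball_subset_ball ht).trans ball_subset_closedBall)
  have hfreq_v : ∀ t ∈ Set.Icc r (r / a),
      t * cutoffEnergy φ v x t ≤ Λ * cutoffHeight φ v x t := fun t ht => by
    rw [← hφ.cutoffHeight_congr (hr.trans_le ht.1) (huv_ball ht.2),
      ← hφ.cutoffEnergy_congr (hr.trans_le ht.1) (huv_ball ht.2)]
    exact hfreq t ht
  have hfderiv : Set.EqOn (fderiv ℝ u) (fderiv ℝ v) (ball x r) := fun y hy =>
    ((huv_ball hrR).eventuallyEq_of_mem (isOpen_ball.mem_nhds hy)).fderiv_eq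
  rw [hφ.cutoffHeight_congr hr (huv_ball hrR)]
  refine ⟨(setIntegral_congr_fun measurableSet_ball fun y hy => ?_).trans_le
      (hφ.setIntegral_ball_norm_sq_le hv hr hΛ hΔ hfreq_v),
    (setIntegral_congr_fun measurableSet_ball fun y hy => ?_).trans_le
      (hφ.setIntegral_ball_norm_mul_sqrt_frobeniusSq_le hv hr hΛ hΔ hfreq_v),
    (setIntegral_congr_fun measurableSet_ball fun y hy => ?_).trans_le
      (hφ.setIntegral_ball_frobeniusSq_le hv hr hΛ hΔ hfreq_v)⟩
  · simp only [huv_ball hrR hy]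
  · simp only [huv_ball hrR hy, hfderiv hy]
  · simp only [hfderiv hy]

end BallEstimates

section EuclideanFour

variable {F : Type*} [NormedAddCommGroup F]

lemma Hphi_eq_cutoffHeight (φ : ℝ → ℝ) (u : E4 → F) (x : E4) (t : ℝ) :
    Hphi φ u x t = cutoffHeight φ u x t := by
  simp only [Hphi, cutoffHeight, radialWeight, mul_neg, integral_neg, mul_assoc]

variable [InnerProductSpace ℝ F] {u : E4 → F}

lemma gradSq_eq_frobeniusSq (u : E4 → F) (y : E4) : gradSq u y = frobeniusSq (fderiv ℝ u y) := by
  simp [gradSq, frobeniusSq_eq_sum (EuclideanSpace.basisFun (Fin 4) ℝ)]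

lemma Dphi_eq_cutoffEnergy (φ : ℝ → ℝ) (u : E4 → F) (x : E4) (t : ℝ) :
    Dphi φ u x t = cutoffEnergy φ u x t := by
  simp only [Dphi, gradSq_eq_frobeniusSq, cutoffEnergy, radialCutoff]

lemma IsHarmonicOn.harmonicOnNhd {Ω : Set E4} (hu : IsHarmonicOn u Ω) (hΩ : IsOpen Ω) :
    HarmonicOnNhd u Ω := by
  refine fun y hy => ⟨(hu.1.contDiffAt (hΩ.mem_nhds hy)).of_le ?_, ?_⟩
  · exact WithTop.coe_le_coe.2 le_top
  · filter_upwards [hΩ.mem_nhds hy] with z hz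
    simpa [laplacian_eq_iteratedFDeriv_orthonormalBasis u (EuclideanSpace.basisFun (Fin 4) ℝ)]
      using hu.2 z hz

lemma mul_cutoffEnergy_le_of_Nphi_le {φ : ℝ → ℝ} {x : E4} {t Λ : ℝ} (hH : 0 < Hphi φ u x t)
    (hN : Nphi φ u x t ≤ Λ) : t * cutoffEnergy φ u x t ≤ Λ * cutoffHeight φ u x t := by
  rwa [← Dphi_eq_cutoffEnergy, ← Hphi_eq_cutoffHeight, ← div_le_iff₀ hH]

end EuclideanFour

/-- Flat-case analogue of Lemma 4.3: `∫_{B_x(r)} |u|²`, `∫_{B_x(r)} |u||∇u|` and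
`∫_{B_x(r)} |∇u|²` are controlled by `H_φ(x,r)`, with constant depending only
on `φ` and `Λ`. -/
theorem stmt_16 (φ : ℝ → ℝ) (hφs : ContDiff ℝ (⊤ : ℕ∞) φ) (hφa : Antitone φ)
    (hφ1 : ∀ t ≤ (3/4 : ℝ), φ t = 1) (hφ0 : ∀ t, (1:ℝ) ≤ t → φ t = 0)
    (Λ : ℝ) (hΛ : 0 < Λ) :
    ∃ C > (0:ℝ),
      ∀ (F : Type) [NormedAddCommGroup F] [InnerProductSpace ℝ F] [FiniteDimensional ℝ F],
      ∀ (u : E4 → F) (Ω : Set E4), IsOpen Ω → IsHarmonicOn u Ω →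
      ∀ (x : E4) (r : ℝ), 0 < r → closedBall x (2 * r) ⊆ Ω →
      (∀ t ∈ Set.Ioc (0:ℝ) (2 * r), 0 < Hphi φ u x t ∧ Nphi φ u x t ≤ Λ) →
      (∫ y in ball x r, ‖u y‖ ^ 2) ≤ C * r * Hphi φ u x r ∧
      (∫ y in ball x r, ‖u y‖ * Real.sqrt (gradSq u y)) ≤ C * Hphi φ u x r ∧
      (∫ y in ball x r, gradSq u y) ≤ C * r⁻¹ * Hphi φ u x r := by
  have hφ : IsCutoff (3 / 4) φ := ⟨by norm_num, hφs.of_le (by exact_mod_cast le_top), hφa, hφ1, hφ0⟩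
  refine ⟨ballEstimateConst 4 (3 / 4) Λ, ballEstimateConst_pos 4 hφ.pos hΛ.le,
    fun F _ _ _ u Ω hΩ hu x r hr hball hN => ?_⟩
  have hradius : r / (3 / 4) ≤ 2 * r := by linarith
  have hharm : HarmonicOnNhd u (closedBall x (r / (3 / 4))) := fun y hy =>
    hu.harmonicOnNhd hΩ y (hball (closedBall_subset_closedBall hradius hy))
  have hfreq : ∀ t ∈ Set.Icc r (r / (3 / 4)),
      t * cutoffEnergy φ u x t ≤ Λ * cutoffHeight φ u x t := fun t ht =>
    have ⟨hH, hNle⟩ := hN t ⟨hr.trans_le ht.1, ht.2.trans hradius⟩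
    mul_cutoffEnergy_le_of_Nphi_le hH hNle
  simpa only [gradSq_eq_frobeniusSq, Hphi_eq_cutoffHeight, finrank_euclideanSpace_fin] using
    stmt_16_general hφ hr hΛ.le hharm hfreq
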